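/- Let A₁, A₂, A₃ be hermitian 4×4 complex matrices whose joint numerical range W = W(A₁,A₂,A₃) has dimension 3. If G₁, G₂, G₃ are three mutually distinct one-dimensional faces of W whose intersection G₁ ∩ G₂ ∩ G₃ is nonempty, then this intersection is a singleton {p} and p is a corner point of W. -/

import Mathlib

open Matrix ComplexOrder

noncomputable section

/-- A density matrix: positive semidefinite with unit trace. -/
def IsDensity {n : Type*} [Fintype n] (ρ : Matrix n n ℂ) : Prop :=
  ρ.PosSemidef ∧ ρ.trace = 1

/-- The measurement map `ρ ↦ (tr ρA₁, …, tr ρA_k)` (the traces are real for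
hermitian matrices). -/
def wpt {n : Type*} [Fintype n] {k : ℕ} (A : Fin k → Matrix n n ℂ)
    (ρ : Matrix n n ℂ) : Fin k → ℝ :=
  fun i => ((ρ * A i).trace).re

/-- The joint numerical range of `k` matrices. -/
def JNR {n : Type*} [Fintype n] {k : ℕ} (A : Fin k → Matrix n n ℂ) :
    Set (Fin k → ℝ) :=
  wpt A '' {ρ | IsDensity ρ}

/-- `F` is a face of the convex set `C`: a convex subset such that whenever an
open segment between two points of `C` meets `F`, both endpoints lie in `F`. -/
def IsFaceOf {E : Type*} [AddCommGroup E] [Module ℝ E] (C F : Set E) : Prop :=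
  Convex ℝ F ∧ IsExtreme ℝ C F

/-- The dimension of a convex set: the dimension of its affine hull. -/
def convDim {E : Type*} [AddCommGroup E] [Module ℝ E] (F : Set E) : ℕ :=
  Module.finrank ℝ (affineSpan ℝ F).direction

/-- Euclidean dot product on `Fin d → ℝ`. -/
def dotR {d : ℕ} (u v : Fin d → ℝ) : ℝ := ∑ i, u i * v i

/-- `F` is an exposed face of `C`: the set of minimizers of a linear functional. -/
def IsExposedFace {d : ℕ} (C F : Set (Fin d → ℝ)) : Prop :=
  ∃ u : Fin d → ℝ, F = {x ∈ C | ∀ y ∈ C, dotR u x ≤ dotR u y}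

/-- The normal cone of `C` at `p`. -/
def normalConeAt {d : ℕ} (C : Set (Fin d → ℝ)) (p : Fin d → ℝ) :
    Set (Fin d → ℝ) :=
  {u | ∀ y ∈ C, 0 ≤ dotR (y - p) u}

/-- `p` is a corner point of `C` if the normal cone of `C` at `p` spans `ℝ^d`. -/
def IsCornerPoint {d : ℕ} (C : Set (Fin d → ℝ)) (p : Fin d → ℝ) : Prop :=
  p ∈ C ∧ Submodule.span ℝ (normalConeAt C p) = ⊤

/-- The closed unit disk of `ℝ²`. -/
def unitDisk2 : Set (Fin 2 → ℝ) := {v | v 0 ^ 2 + v 1 ^ 2 ≤ 1}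

/-- An elliptic disk in `ℝ³`: the image of the closed unit disk of `ℝ²` under an
injective affine map. -/
def IsEllipticDisk (F : Set (Fin 3 → ℝ)) : Prop :=
  ∃ f : (Fin 2 → ℝ) →ᵃ[ℝ] (Fin 3 → ℝ), Function.Injective f ∧ F = f '' unitDisk2

/-- A non-elliptic face of `W`: a two-dimensional face that is not an elliptic
disk. -/
def IsNonEllipticFace (W F : Set (Fin 3 → ℝ)) : Prop :=
  IsFaceOf W F ∧ convDim F = 2 ∧ ¬ IsEllipticDisk F

/-- A rank-3 face of the joint numerical range of `A`. -/
def IsRank3Face {k : ℕ} (A : Fin k → Matrix (Fin 4) (Fin 4) ℂ)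
    (F : Set (Fin k → ℝ)) : Prop :=
  F.Nonempty ∧ IsFaceOf (JNR A) F ∧
    ∃ P : Matrix (Fin 4) (Fin 4) ℂ, Pᴴ = P ∧ P * P = P ∧ P.rank = 3 ∧
      ∀ ρ : Matrix (Fin 4) (Fin 4) ℂ, IsDensity ρ → (wpt A ρ ∈ F ↔ P * ρ * P = ρ)

/-!
After a translation `p = 0`, so the origin is an extreme point of `W`, and `W` is the convex hull
of the values of the joint quadratic form `v ↦ (⟪v, Tⱼ v⟫)ⱼ` on the unit sphere. Each edge is a
segment starting at `0` that contains a nonzero value `gᵢ` of the form at some vector `yᵢ`, and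
`g₁, g₂, g₃` are linearly independent. Pick a supporting normal for each edge. If none of them
vanishes on a second edge, the three normals are independent and span `ℝ³`.

Otherwise some normal `u` vanishes at `g₁` and `g₂`, say, but not at `g₃`. Let `x ≠ 0` be isotropic,
meaning that the form vanishes at `x`. For every scalar `t` the value of the form at `x + t yᵢ` lies
on the ray through `gᵢ`, which forces `⟪x, Tⱼ yᵢ⟫ = 0`. Hence `y₂ ∉ span {x, y₁}`, because the form
takes values in `ℝ g₁` there, and `y₃ ∉ span {x, y₁, y₂}`, because the positive semidefinite form
`⟪v, ∑ⱼ uⱼ Tⱼ v⟫` vanishes there. In dimension at most four `x, y₁, y₂, y₃` is thus a basis, whence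
`Tⱼ x = 0` for all `j`. So every isotropic vector lies in the common kernel of the `Tⱼ`, and the
normal cone only depends on the values of the form on the unit sphere of the orthogonal complement
of that kernel. The convex hull of this compact set avoids the extreme point `0`, so it lies in an
open half-space `{y | 0 < y ⬝ᵥ u}`, and the normal cone contains a neighbourhood of `u`.
-/

open scoped Pointwise

section Faces

variable {V : Type*} [AddCommGroup V] [Module ℝ V] {C F G S : Set V}

namespace IsFaceOf

theorem inter (hF : IsFaceOf C F) (hG : IsFaceOf C G) : IsFaceOf C (F ∩ G) :=
  ⟨hF.1.inter hG.1, hF.2.inter hG.2⟩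

theorem vadd (hF : IsFaceOf C F) (v : V) : IsFaceOf (v +ᵥ C) (v +ᵥ F) := by
  refine ⟨hF.1.vadd v, Set.vadd_set_mono hF.2.subset, ?_⟩
  rintro _ ⟨x, hx, rfl⟩ _ ⟨y, hy, rfl⟩ _ ⟨z, hz, rfl⟩ hzxy
  exact Set.vadd_mem_vadd_set <| hF.2.left_mem_of_mem_openSegment hx hy hz <|
    (mem_openSegment_translate ℝ v).1 hzxy

theorem subset_convexHull_inter (hF : IsFaceOf (convexHull ℝ S) F) :
    F ⊆ convexHull ℝ (S ∩ F) := by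
  have hconv : Convex ℝ {x ∈ convexHull ℝ S | x ∈ F → x ∈ convexHull ℝ (S ∩ F)} := by
    rw [convex_iff_forall_pos]
    rintro x ⟨hxS, hx⟩ y ⟨hyS, hy⟩ a b ha hb hab
    have hxy : a • x + b • y ∈ openSegment ℝ x y := ⟨a, b, ha, hb, hab, rfl⟩
    exact ⟨convex_convexHull ℝ S hxS hyS ha.le hb.le hab, fun h => convex_convexHull ℝ _
      (hx (hF.2.left_mem_of_mem_openSegment hxS hyS h hxy))
      (hy (hF.2.right_mem_of_mem_openSegment hxS hyS h hxy)) ha.le hb.le hab⟩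
  have hsub : convexHull ℝ S ⊆ {x ∈ convexHull ℝ S | x ∈ F → x ∈ convexHull ℝ (S ∩ F)} :=
    convexHull_min (fun x hx => ⟨subset_convexHull ℝ S hx,
      fun hxF => subset_convexHull ℝ (S ∩ F) ⟨hx, hxF⟩⟩) hconv
  exact fun x hx => (hsub (hF.2.subset hx)).2 hx

-- A face of `C` through the origin generates a face of the cone generated by `C`.
theorem mem_of_smul_add_smul_eq (hC : Convex ℝ C) (hF : IsFaceOf C F) (h0 : (0 : V) ∈ F)
    {x y g : V} (hx : x ∈ C) (hy : y ∈ C) (hg : g ∈ F) {a b t : ℝ} (ha : 0 < a) (hb : 0 ≤ b)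
    (ht : 0 ≤ t) (h : a • x + b • y = t • g) : x ∈ F := by
  set r := b + t + 1
  have hr0 : 0 < r := by positivity
  have hgF : (t / (a + r)) • g ∈ F :=
    hF.1.smul_mem_of_zero_mem h0 hg
      ⟨by positivity, (div_le_one (by positivity)).2 (by linarith)⟩
  have hyC : (b / r) • y ∈ C :=
    hC.smul_mem_of_zero_mem (hF.2.subset h0) hy
      ⟨by positivity, (div_le_one hr0).2 (by linarith)⟩
  refine hF.2.left_mem_of_mem_openSegment hx hyC hgF
    ⟨a / (a + r), r / (a + r), by positivity, by positivity, by field_simp, ?_⟩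
  rw [smul_smul, div_mul_div_cancel₀' hr0.ne']
  simp only [div_eq_inv_mul, mul_smul, ← smul_add, h]

theorem mem_of_sum_smul_eq {ι : Type*} [Fintype ι] (hC : Convex ℝ C) (hF : IsFaceOf C F)
    (h0 : (0 : V) ∈ F) {x : ι → V} {g : V} (hx : ∀ i, x i ∈ C) (hg : g ∈ F) {w : ι → ℝ} {t : ℝ}
    (hw : ∀ i, 0 ≤ w i) (ht : 0 ≤ t) (h : ∑ i, w i • x i = t • g) {j : ι} (hj : 0 < w j) :
    x j ∈ F := by
  classical
  set s := Finset.univ.erase j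
  set b := ∑ i ∈ s, w i
  have hb0 : 0 ≤ b := Finset.sum_nonneg fun i _ => hw i
  obtain ⟨y, hyC, hy⟩ : ∃ y ∈ C, ∑ i ∈ s, w i • x i = b • y := by
    rcases hb0.eq_or_lt with hb' | hb'
    · have hzero := (Finset.sum_eq_zero_iff_of_nonneg fun i _ => hw i).1 hb'.symm
      refine ⟨0, hF.2.subset h0, ?_⟩
      rw [smul_zero]
      exact Finset.sum_eq_zero fun i hi => by rw [hzero i hi, zero_smul]
    · exact ⟨s.centerMass w x, hC.centerMass_mem (fun i _ => hw i) hb' fun i _ => hx i,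
        by rw [Finset.centerMass, smul_inv_smul₀ hb'.ne']⟩
  refine hF.mem_of_smul_add_smul_eq hC h0 (hx j) hyC hg hj hb0 ht ?_
  rw [← hy, Finset.add_sum_erase _ (fun i => w i • x i) (Finset.mem_univ j), h]

theorem eq_zero_of_sum_smul_eq_zero {ι : Type*} [Fintype ι] (hC : Convex ℝ C)
    (hF : IsFaceOf C F) (h0 : (0 : V) ∈ F) {g : ι → V} (hgC : ∀ i, g i ∈ C) {k : ι}
    (hgk : g k ∈ F) (hgk0 : g k ≠ 0) (hg : ∀ i ≠ k, g i ∉ F) {c : ι → ℝ}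
    (hc : ∀ i ≠ k, 0 ≤ c i) (h : ∑ i, c i • g i = 0) : c = 0 := by
  have hpos : ∑ i, (c i)⁺ • g i = (c k)⁻ • g k := by
    have hneg : ∑ i, (c i)⁻ • g i = (c k)⁻ • g k :=
      Fintype.sum_eq_single k fun i hi => by rw [negPart_eq_zero.2 (hc i hi), zero_smul]
    rw [← hneg, ← sub_eq_zero, ← Finset.sum_sub_distrib]
    simpa only [← sub_smul, posPart_sub_negPart] using h
  have hzero : ∀ i ≠ k, c i = 0 := fun i hi => by
    by_contra hci
    exact hg i hi <| hF.mem_of_sum_smul_eq hC h0 hgC hgk (fun i => posPart_nonneg (c i))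
      (negPart_nonneg (c k)) hpos (posPart_pos ((hc i hi).lt_of_ne' hci))
  rw [Fintype.sum_eq_single k fun i hi => by rw [hzero i hi, zero_smul]] at h
  funext i
  rcases eq_or_ne i k with rfl | hi
  · exact (smul_eq_zero.1 h).resolve_right hgk0
  · exact hzero i hi

end IsFaceOf

theorem exists_forall_ne_nonneg_or_nonpos (c : Fin 3 → ℝ) :
    ∃ k, (∀ i ≠ k, 0 ≤ c i) ∨ ∀ i ≠ k, c i ≤ 0 := by
  simp only [Fin.exists_fin_succ, Fin.forall_fin_succ]
  have h0 := le_total 0 (c 0)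
  have h1 := le_total 0 (c 1)
  have h2 := le_total 0 (c 2)
  simp only [ne_eq, not_true_eq_false, IsEmpty.forall_iff, Fin.succ_zero_eq_one, one_ne_zero,
    not_false_eq_true, forall_const, Fin.succ_one_eq_two, Fin.reduceEq, and_true, true_and,
    zero_ne_one, IsEmpty.exists_iff, or_false]
  tauto

theorem linearIndependent_of_mem_faces (hC : Convex ℝ C) {F : Fin 3 → Set V}
    (hF : ∀ i, IsFaceOf C (F i)) (h0 : ∀ i, (0 : V) ∈ F i) {g : Fin 3 → V} (hg : ∀ i, g i ∈ F i)
    (hg0 : ∀ i, g i ≠ 0) (hgF : ∀ i j, i ≠ j → g i ∉ F j) : LinearIndependent ℝ g := by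
  have hgC : ∀ i, g i ∈ C := fun i => (hF i).2.subset (hg i)
  refine Fintype.linearIndependent_iff.2 fun c hc => congrFun ?_
  obtain ⟨k, hk | hk⟩ := exists_forall_ne_nonneg_or_nonpos c
  · exact (hF k).eq_zero_of_sum_smul_eq_zero hC (h0 k) hgC (hg k) (hg0 k) (hgF · k) hk hc
  · refine neg_eq_zero.1 ((hF k).eq_zero_of_sum_smul_eq_zero (c := -c) hC (h0 k) hgC (hg k) (hg0 k)
      (hgF · k) (fun i hi => neg_nonneg.2 (hk i hi)) ?_)
    simp only [Pi.neg_apply, neg_smul, Finset.sum_neg_distrib, hc, neg_zero]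

/-- `F` is an edge of `C` at `p`: a one-dimensional face of `C` containing `p`. -/
structure IsEdgeAt (C : Set V) (p : V) (F : Set V) : Prop where
  isFaceOf : IsFaceOf C F
  mem : p ∈ F
  convDim_eq_one : convDim F = 1

namespace IsEdgeAt

theorem vadd {p : V} (hF : IsEdgeAt C p F) (v : V) : IsEdgeAt (v +ᵥ C) (v + p) (v +ᵥ F) where
  isFaceOf := hF.isFaceOf.vadd v
  mem := Set.vadd_mem_vadd_set hF.mem
  convDim_eq_one := by
    rw [convDim, direction_affineSpan, vectorSpan_vadd, ← direction_affineSpan]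
    exact hF.convDim_eq_one

theorem exists_mem_ne {p : V} (hF : IsEdgeAt C p F) : ∃ x ∈ F, x ≠ p := by
  by_contra! h
  have hFp : F = {p} := Set.eq_singleton_iff_unique_mem.2 ⟨hF.mem, h⟩
  have hdim := hF.convDim_eq_one
  rw [convDim, hFp, direction_affineSpan, vectorSpan_singleton, finrank_bot] at hdim
  exact zero_ne_one hdim

theorem exists_eq_smul (hF : IsEdgeAt C 0 F) {g x : V} (hg : g ∈ F) (hg0 : g ≠ 0) (hx : x ∈ F) :
    ∃ t : ℝ, x = t • g := by
  have hdir : ∀ y ∈ F, y ∈ (affineSpan ℝ F).direction := fun y hy => by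
    simpa using AffineSubspace.vsub_mem_direction (subset_affineSpan ℝ F hy)
      (subset_affineSpan ℝ F hF.mem)
  have hg0' : (⟨g, hdir g hg⟩ : (affineSpan ℝ F).direction) ≠ 0 :=
    fun h => hg0 (congrArg Subtype.val h)
  obtain ⟨t, ht⟩ :=
    (finrank_eq_one_iff_of_nonzero' _ hg0').1 hF.convDim_eq_one ⟨x, hdir x hx⟩
  exact ⟨t, (congrArg Subtype.val ht).symm⟩

theorem exists_eq_nonneg_smul (hC : Convex ℝ C) (hF : IsEdgeAt C 0 F) (h0 : IsFaceOf C {0})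
    {g x : V} (hg : g ∈ F) (hg0 : g ≠ 0) (hx : x ∈ F) : ∃ t : ℝ, 0 ≤ t ∧ x = t • g := by
  obtain ⟨t, rfl⟩ := hF.exists_eq_smul hg hg0 hx
  refine ⟨t, le_of_not_gt fun ht => hg0 ?_, rfl⟩
  exact h0.mem_of_smul_add_smul_eq hC rfl (hF.isFaceOf.2.subset hg) (hF.isFaceOf.2.subset hx)
    rfl (neg_pos.2 ht) zero_le_one le_rfl (by simp)

theorem subset_of_mem (hC : Convex ℝ C) (hF : IsEdgeAt C 0 F) (hG : IsFaceOf C G)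
    (h0 : (0 : V) ∈ G) {g : V} (hgF : g ∈ F) (hgG : g ∈ G) (hg0 : g ≠ 0) : F ⊆ G := by
  intro x hx
  obtain ⟨t, rfl⟩ := hF.exists_eq_smul hgF hg0 hx
  have hxC := hF.isFaceOf.2.subset hx
  have hgC := hG.2.subset hgG
  rcases le_total 0 t with ht | ht
  · exact hG.mem_of_smul_add_smul_eq hC h0 hxC hgC hgG one_pos le_rfl ht (by simp)
  · exact hG.mem_of_smul_add_smul_eq hC h0 hxC hgC hgG one_pos (neg_nonneg.2 ht) le_rfl (by simp)

theorem inter_eq_singleton {p : V} (hC : Convex ℝ C) (hF : IsEdgeAt C p F) (hG : IsEdgeAt C p G)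
    (hFG : F ≠ G) : F ∩ G = {p} := by
  wlog hp : p = 0 generalizing C F G p
  · have h := this (hC.vadd (-p)) (hF.vadd (-p)) (hG.vadd (-p))
      ((AddAction.injective (-p)).image_injective.ne hFG) (neg_add_cancel p)
    rwa [← Set.vadd_set_inter, vadd_eq_iff_eq_neg_vadd, Set.vadd_set_singleton, neg_neg,
      vadd_eq_add, add_neg_cancel_left] at h
  subst hp
  refine Set.eq_singleton_iff_unique_mem.2 ⟨⟨hF.mem, hG.mem⟩, fun g hg => ?_⟩
  by_contra hg0
  exact hFG <| (hF.subset_of_mem hC hG.isFaceOf hG.mem hg.1 hg.2 hg0).antisymm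
    (hG.subset_of_mem hC hF.isFaceOf hF.mem hg.2 hg.1 hg0)

theorem notMem_of_ne {p g : V} (hC : Convex ℝ C) (hF : IsEdgeAt C p F) (hG : IsEdgeAt C p G)
    (hFG : F ≠ G) (hg : g ∈ F) (hgp : g ≠ p) : g ∉ G := fun hgG =>
  hgp <| (hF.inter_eq_singleton hC hG hFG).subset ⟨hg, hgG⟩

end IsEdgeAt

end Faces

section Convex

theorem interior_nonempty_of_span_eq_top {V : Type*} [NormedAddCommGroup V] [NormedSpace ℝ V]
    [FiniteDimensional ℝ V] {C : Set V} (hC : Convex ℝ C) (h0 : (0 : V) ∈ C)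
    (hspan : Submodule.span ℝ C = ⊤) : (interior C).Nonempty := by
  rw [hC.interior_nonempty_iff_affineSpan_eq_top, ← Set.insert_eq_of_mem h0,
    ← AffineSubspace.coe_eq_univ_iff, affineSpan_insert_zero, hspan, Submodule.top_coe]

section TopologicalVectorSpace

variable {V : Type*} [AddCommGroup V] [Module ℝ V] [TopologicalSpace V] [IsTopologicalAddGroup V]
  [ContinuousSMul ℝ V] {C F : Set V}

theorem IsFaceOf.disjoint_interior (hF : IsFaceOf C F) (hFC : F ≠ C) :
    Disjoint (interior C) F := by
  refine Set.disjoint_left.2 fun m hmi hmF => hFC (hF.2.subset.antisymm fun w hw => ?_)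
  have hlim : Filter.Tendsto (fun e : ℝ => m + e • (m - w)) (nhdsWithin 0 (Set.Ioi 0))
      (nhds m) := by
    have hcont : Continuous fun e : ℝ => m + e • (m - w) := by fun_prop
    simpa using (hcont.tendsto 0).mono_left nhdsWithin_le_nhds
  obtain ⟨e, heC, he : 0 < e⟩ :=
    ((hlim.eventually (isOpen_interior.mem_nhds hmi)).and self_mem_nhdsWithin).exists
  refine hF.2.left_mem_of_mem_openSegment hw (interior_subset heC) hmF
    ⟨e / (1 + e), 1 / (1 + e), by positivity, by positivity, by field_simp; ring, ?_⟩
  match_scalars <;> field_simp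
  ring

theorem IsFaceOf.exists_nonneg_functional (hC : Convex ℝ C) (hint : (interior C).Nonempty)
    (hF : IsFaceOf C F) (h0 : (0 : V) ∈ F) (hFC : F ≠ C) :
    ∃ φ : StrongDual ℝ V, φ ≠ 0 ∧ (∀ x ∈ C, 0 ≤ φ x) ∧ ∀ x ∈ F, φ x = 0 := by
  obtain ⟨φ, c, hφC, hφF⟩ := geometric_hahn_banach_open hC.interior isOpen_interior hF.1
    (hF.disjoint_interior hFC)
  have hle : ∀ x ∈ C, φ x ≤ c := fun x hx =>
    closure_minimal (fun y hy => (hφC y hy).le) (isClosed_le φ.continuous continuous_const)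
      (hC.closure_interior_eq_closure_of_nonempty_interior hint ▸ subset_closure hx)
  have hc : c = 0 := by
    rw [← map_zero φ]
    exact (hφF 0 h0).antisymm (hle 0 (hF.2.subset h0))
  subst hc
  refine ⟨-φ, ?_, fun x hx => neg_nonneg.2 (hle x hx), fun x hx =>
    neg_eq_zero.2 ((hle x (hF.2.subset hx)).antisymm (hφF x hx))⟩
  obtain ⟨m, hm⟩ := hint
  exact fun h => (hφC m hm).ne (by rw [neg_eq_zero.1 h]; rfl)

end TopologicalVectorSpace

theorem isCompact_convexHull {V : Type*} [NormedAddCommGroup V] [NormedSpace ℝ V]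
    [FiniteDimensional ℝ V] {S : Set V} (hS : IsCompact S) : IsCompact (convexHull ℝ S) := by
  have hunion : convexHull ℝ S = ⋃ m ∈ Set.Iic (Module.finrank ℝ V + 1),
      (fun q : (Fin m → ℝ) × (Fin m → V) => ∑ i, q.1 i • q.2 i) ''
        (stdSimplex ℝ (Fin m) ×ˢ Set.univ.pi fun _ => S) := by
    refine Set.Subset.antisymm (fun x hx => ?_) (Set.iUnion₂_subset fun m _ => ?_)
    · obtain ⟨ι, _, z, w, hz, hai, hw, hw1, rfl⟩ := eq_pos_convex_span_of_mem_convexHull hx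
      have e := (Fintype.equivFin ι).symm
      refine Set.mem_biUnion (x := Fintype.card ι) ?_ ⟨(w ∘ e, z ∘ e),
        ⟨⟨fun i => (hw (e i)).le, (e.sum_comp w).trans hw1⟩, fun i _ => hz ⟨e i, rfl⟩⟩,
        e.sum_comp fun i => w i • z i⟩
      exact hai.card_le_finrank_succ.trans (Nat.add_le_add_right (Submodule.finrank_le _) 1)
    · rintro _ ⟨⟨w, z⟩, ⟨⟨hw0, hw1⟩, hz⟩, rfl⟩
      exact (convex_convexHull ℝ S).sum_mem (fun i _ => hw0 i) hw1
        fun i _ => subset_convexHull ℝ S (hz i trivial)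
  rw [hunion]
  refine (Set.finite_Iic _).isCompact_biUnion fun m _ => ?_
  exact ((isCompact_stdSimplex ℝ (Fin m)).prod (isCompact_univ_pi fun _ => hS)).image (by fun_prop)

end Convex

section NormalCone

variable {d : ℕ} {C F : Set (Fin d → ℝ)} {u : Fin d → ℝ}

theorem mem_normalConeAt_zero : u ∈ normalConeAt C 0 ↔ ∀ y ∈ C, 0 ≤ y ⬝ᵥ u := by
  simp only [normalConeAt, sub_zero]
  rfl

theorem normalConeAt_vadd (C : Set (Fin d → ℝ)) (p v : Fin d → ℝ) :
    normalConeAt (v +ᵥ C) (v + p) = normalConeAt C p := by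
  ext u
  simp only [normalConeAt, Set.mem_ofPred_eq, ← Set.image_vadd, Set.forall_mem_image, vadd_eq_add,
    add_sub_add_left_eq_sub]

theorem normalConeAt_convexHull (S : Set (Fin d → ℝ)) (p : Fin d → ℝ) :
    normalConeAt (convexHull ℝ S) p = normalConeAt S p := by
  refine Set.Subset.antisymm (fun u hu y hy => hu y (subset_convexHull ℝ S hy)) fun u hu => ?_
  have hconv : Convex ℝ {y | p ⬝ᵥ u ≤ y ⬝ᵥ u} :=
    convex_halfSpace_ge ⟨fun x y => add_dotProduct x y u, fun c x => smul_dotProduct c x u⟩ _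
  have hdot : ∀ y, dotR (y - p) u = y ⬝ᵥ u - p ⬝ᵥ u := fun y => sub_dotProduct y p u
  have hsub : convexHull ℝ S ⊆ {y | p ⬝ᵥ u ≤ y ⬝ᵥ u} :=
    convexHull_min (fun y hy => sub_nonneg.1 (hdot y ▸ hu y hy)) hconv
  exact fun y hy => hdot y ▸ sub_nonneg.2 (hsub hy)

theorem IsCornerPoint.of_vadd {p v : Fin d → ℝ} (h : IsCornerPoint (v +ᵥ C) (v + p)) :
    IsCornerPoint C p :=
  ⟨Set.vadd_mem_vadd_set_iff.1 h.1, normalConeAt_vadd C p v ▸ h.2⟩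

theorem exists_forall_eq_dotProduct (φ : StrongDual ℝ (Fin d → ℝ)) :
    ∃ u : Fin d → ℝ, ∀ x, φ x = x ⬝ᵥ u :=
  ⟨(dotProductEquiv ℝ (Fin d)).symm φ, fun x => by
    rw [dotProduct_comm]
    exact (DFunLike.congr_fun ((dotProductEquiv ℝ (Fin d)).apply_symm_apply φ) x).symm⟩

theorem IsFaceOf.exists_mem_normalConeAt_zero (hC : Convex ℝ C) (hint : (interior C).Nonempty)
    (hF : IsFaceOf C F) (h0 : 0 ∈ F) (hFC : F ≠ C) :
    ∃ u ∈ normalConeAt C 0, u ≠ 0 ∧ ∀ x ∈ F, x ⬝ᵥ u = 0 := by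
  obtain ⟨φ, hφ, hφC, hφF⟩ := hF.exists_nonneg_functional hC hint h0 hFC
  obtain ⟨u, hu⟩ := exists_forall_eq_dotProduct φ
  refine ⟨u, mem_normalConeAt_zero.2 fun y hy => hu y ▸ hφC y hy, fun h => hφ ?_,
    fun x hx => hu x ▸ hφF x hx⟩
  ext1 x
  rw [hu, h, dotProduct_zero, _root_.zero_apply]

theorem span_normalConeAt_zero_eq_top_of_isCompact (hC : IsCompact C)
    (h0 : 0 ∉ convexHull ℝ C) : Submodule.span ℝ (normalConeAt C 0) = ⊤ := by
  obtain ⟨φ, s, hs0, hs⟩ := geometric_hahn_banach_point_closed (convex_convexHull ℝ C)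
    (isCompact_convexHull hC).isClosed h0
  rw [map_zero] at hs0
  obtain ⟨u, hu⟩ := exists_forall_eq_dotProduct φ
  have hpos : ∀ᶠ w in nhds u, ∀ y ∈ C, 0 < y ⬝ᵥ w := by
    refine hC.eventually_forall_of_forall_eventually fun y hy => ?_
    have hcont : Continuous fun q : (Fin d → ℝ) × (Fin d → ℝ) => q.2 ⬝ᵥ q.1 := by
      fun_prop
    exact hcont.continuousAt.eventually_const_lt
      (hs0.trans ((hs y (subset_convexHull ℝ C hy)).trans_eq (hu y)))
  refine Submodule.eq_top_of_nonempty_interior' _ ⟨u, mem_interior_iff_mem_nhds.2 ?_⟩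
  filter_upwards [hpos] with w hw
  exact Submodule.subset_span (mem_normalConeAt_zero.2 fun y hy => (hw y hy).le)

theorem linearIndependent_of_dotProduct_pos {g u : Fin 3 → Fin d → ℝ}
    (hzero : ∀ i, g i ⬝ᵥ u i = 0) (hpos : ∀ i j, i ≠ j → 0 < g j ⬝ᵥ u i) :
    LinearIndependent ℝ u := by
  refine LinearIndependent.of_comp (Matrix.of g).mulVecLin ?_
  refine Matrix.linearIndependent_rows_of_det_ne_zero (A := Matrix.of fun i j => g j ⬝ᵥ u i) ?_
  have h01 := hpos 0 1 (by decide)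
  have h02 := hpos 0 2 (by decide)
  have h10 := hpos 1 0 (by decide)
  have h12 := hpos 1 2 (by decide)
  have h20 := hpos 2 0 (by decide)
  have h21 := hpos 2 1 (by decide)
  simp only [Matrix.det_fin_three, Matrix.of_apply, hzero]
  ring_nf
  positivity

theorem exists_dotProduct_ne_zero {g : Fin d → Fin d → ℝ} (hg : LinearIndependent ℝ g)
    (hu : u ≠ 0) : ∃ i, g i ⬝ᵥ u ≠ 0 := by
  by_contra! h
  have hunit : IsUnit (Matrix.of g) := Matrix.linearIndependent_rows_iff_isUnit.1 hg
  exact hu (Matrix.mulVec_injective_iff_isUnit.2 hunit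
    ((funext h : Matrix.of g *ᵥ u = 0).trans (Matrix.mulVec_zero _).symm))

theorem isCornerPoint_or_exists_mem_normalConeAt {C : Set (Fin 3 → ℝ)} {F : Fin 3 → Set (Fin 3 → ℝ)}
    (hC : Convex ℝ C) (hF : ∀ i, IsFaceOf C (F i)) (h0 : ∀ i, 0 ∈ F i) {g : Fin 3 → Fin 3 → ℝ}
    (hg : ∀ i, g i ∈ F i) (hgF : ∀ i j, i ≠ j → g i ∉ F j) (hli : LinearIndependent ℝ g) :
    IsCornerPoint C 0 ∨ ∃ u ∈ normalConeAt C 0, ∃ i j k,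
      i ≠ j ∧ g i ⬝ᵥ u = 0 ∧ g j ⬝ᵥ u = 0 ∧ g k ⬝ᵥ u ≠ 0 := by
  have hgC : ∀ i, g i ∈ C := fun i => (hF i).2.subset (hg i)
  have h0C : 0 ∈ C := (hF 0).2.subset (h0 0)
  have hint : (interior C).Nonempty := interior_nonempty_of_span_eq_top hC h0C <|
    top_unique <| (hli.span_eq_top_of_card_eq_finrank' (by simp)).ge.trans <|
      Submodule.span_mono (Set.range_subset_iff.2 hgC)
  have hFC : ∀ i, F i ≠ C := fun i hi =>
    hgF (i + 1) i (by simp) (hi ▸ hgC (i + 1))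
  choose u hu hu0 hFu using fun i =>
    (hF i).exists_mem_normalConeAt_zero hC hint (h0 i) (hFC i)
  by_cases hpos : ∀ i j, i ≠ j → g j ⬝ᵥ u i ≠ 0
  · refine .inl ⟨h0C, top_unique ?_⟩
    have huli : LinearIndependent ℝ u :=
      linearIndependent_of_dotProduct_pos (fun i => hFu i _ (hg i)) fun i j hij =>
        (mem_normalConeAt_zero.1 (hu i) _ (hgC j)).lt_of_ne' (hpos i j hij)
    rw [← huli.span_eq_top_of_card_eq_finrank' (by simp)]
    exact Submodule.span_mono (Set.range_subset_iff.2 hu)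
  · push Not at hpos
    obtain ⟨i, j, hij, hgj⟩ := hpos
    obtain ⟨k, hgk⟩ := exists_dotProduct_ne_zero hli (hu0 i)
    exact .inr ⟨u i, hu i, i, j, k, hij, hFu i _ (hg i), hgj, hgk⟩

end NormalCone

section JointForm

theorem eq_zero_of_forall_exists_nonneg_smul {V : Type*} [AddCommGroup V] [Module ℝ V] {g r : V}
    (hg : g ≠ 0) (h : ∀ t : ℝ, ∃ s : ℝ, 0 ≤ s ∧ t ^ 2 • g + (2 * t) • r = s • g) : r = 0 := by
  obtain ⟨s, -, hs⟩ := h 1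
  set c := (s - 1) / 2 with hc
  have hr : r = c • g := by
    rw [hc, div_eq_inv_mul, mul_smul, sub_smul, ← hs]
    module
  obtain ⟨s', hs', hcs⟩ := h (-c)
  have hsq : s' = -c ^ 2 := by
    refine smul_left_injective ℝ hg (hcs.symm.trans ?_)
    rw [hr]
    module
  have hc0 : c = 0 := by nlinarith
  rw [hr, hc0, zero_smul]

variable {E : Type*} [NormedAddCommGroup E] [InnerProductSpace ℂ E]

theorem apply_eq_zero_of_span_eq_top {B : E →ₗ[ℂ] E} (hB : B.IsSymmetric) {S : Set E}
    (hS : Submodule.span ℂ S = ⊤) {x : E} (hx : ∀ y ∈ S, inner ℂ x (B y) = 0) : B x = 0 := by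
  have hker : Submodule.span ℂ S ≤ LinearMap.ker (innerₛₗ ℂ (B x)) :=
    Submodule.span_le.2 fun y hy => (hB x y).trans (hx y hy)
  exact inner_self_eq_zero.1 (hker (hS ▸ Submodule.mem_top : B x ∈ Submodule.span ℂ S))

variable {k : ℕ} {T : Fin k → E →ₗ[ℂ] E} {F : Set (Fin k → ℝ)}

/-- The joint quadratic form `v ↦ (⟪v, T₁ v⟫, …, ⟪v, T_k v⟫)` of a family of operators. The real
part is no loss for symmetric operators, whose quadratic forms are real. -/
def jointForm (T : Fin k → E →ₗ[ℂ] E) (v : E) : Fin k → ℝ := fun j => (inner ℂ v (T j v)).re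

/-- The real bilinear form polarizing `jointForm T` when the operators are symmetric. -/
def polarForm (T : Fin k → E →ₗ[ℂ] E) (v w : E) : Fin k → ℝ := fun j => (inner ℂ v (T j w)).re

/-- The joint numerical range of a family of operators, defined through pure states: the convex
hull of the values of the joint quadratic form on unit vectors. -/
def jointRange (T : Fin k → E →ₗ[ℂ] E) : Set (Fin k → ℝ) :=
  convexHull ℝ (jointForm T '' Metric.sphere 0 1)

theorem convex_jointRange : Convex ℝ (jointRange T) := convex_convexHull ℝ _

theorem jointForm_zero : jointForm T 0 = 0 := by
  ext j
  simp [jointForm]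

theorem jointForm_smul (c : ℂ) (v : E) : jointForm T (c • v) = ‖c‖ ^ 2 • jointForm T v := by
  ext j
  simp only [jointForm, map_smul, inner_smul_left, inner_smul_right, Pi.smul_apply, smul_eq_mul]
  rw [← mul_assoc, Complex.mul_conj', ← Complex.ofReal_pow, Complex.re_ofReal_mul]

theorem jointForm_add (hT : ∀ j, (T j).IsSymmetric) (v w : E) :
    jointForm T (v + w) = jointForm T v + jointForm T w + (2 : ℝ) • polarForm T v w := by
  ext j
  have hsymm : (inner ℂ w (T j v)).re = (inner ℂ v (T j w)).re := by
    rw [← hT j w v, ← inner_conj_symm, Complex.conj_re]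
  simp only [jointForm, polarForm, map_add, inner_add_left, inner_add_right, Pi.add_apply,
    Pi.smul_apply, smul_eq_mul, Complex.add_re, hsymm]
  ring

theorem jointForm_add_add_jointForm_sub (v w : E) :
    jointForm T (v + w) + jointForm T (v - w) =
      (2 : ℝ) • jointForm T v + (2 : ℝ) • jointForm T w := by
  ext j
  simp only [jointForm, map_add, map_sub, inner_add_left, inner_add_right, inner_sub_left,
    inner_sub_right, Pi.add_apply, Pi.smul_apply, smul_eq_mul, Complex.add_re, Complex.sub_re]
  ring

theorem jointForm_eq_norm_sq_smul {v : E} (hv : v ≠ 0) :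
    jointForm T v = ‖v‖ ^ 2 • jointForm T (((‖v‖⁻¹ : ℝ) : ℂ) • v) := by
  rw [jointForm_smul, smul_smul, Complex.norm_real, norm_inv, norm_norm, ← mul_pow,
    mul_inv_cancel₀ (norm_ne_zero_iff.2 hv), one_pow, one_smul]

theorem smul_inv_norm_mem_sphere {v : E} (hv : v ≠ 0) :
    ((‖v‖⁻¹ : ℝ) : ℂ) • v ∈ Metric.sphere (0 : E) 1 := by
  rw [mem_sphere_zero_iff_norm, Complex.ofReal_inv]
  exact norm_smul_inv_norm hv

theorem exists_mem_jointRange (h0 : 0 ∈ jointRange T) (v : E) :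
    ∃ c ∈ jointRange T, jointForm T v = ‖v‖ ^ 2 • c := by
  rcases eq_or_ne v 0 with rfl | hv
  · exact ⟨0, h0, by rw [jointForm_zero, smul_zero]⟩
  · exact ⟨_, subset_convexHull ℝ _ ⟨_, smul_inv_norm_mem_sphere hv, rfl⟩,
      jointForm_eq_norm_sq_smul hv⟩

theorem mem_normalConeAt_image_sphere_iff (L : Submodule ℂ E) {u : Fin k → ℝ} :
    u ∈ normalConeAt (jointForm T '' (L ∩ Metric.sphere 0 1)) 0 ↔
      ∀ v ∈ L, 0 ≤ jointForm T v ⬝ᵥ u := by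
  rw [mem_normalConeAt_zero, Set.forall_mem_image]
  refine ⟨fun h v hv => ?_, fun h v hv => h v hv.1⟩
  rcases eq_or_ne v 0 with rfl | hv0
  · rw [jointForm_zero, zero_dotProduct]
  · rw [jointForm_eq_norm_sq_smul hv0, smul_dotProduct]
    exact smul_nonneg (by positivity) (h ⟨L.smul_mem _ hv, smul_inv_norm_mem_sphere hv0⟩)

theorem mem_normalConeAt_jointRange_iff {u : Fin k → ℝ} :
    u ∈ normalConeAt (jointRange T) 0 ↔ ∀ v, 0 ≤ jointForm T v ⬝ᵥ u := by
  rw [jointRange, normalConeAt_convexHull]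
  simpa using mem_normalConeAt_image_sphere_iff (T := T) ⊤ (u := u)

theorem dotProduct_jointForm_eq_zero_of_mem_span {u : Fin k → ℝ}
    (hu : ∀ v, 0 ≤ jointForm T v ⬝ᵥ u) {S : Set E} (hS : ∀ v ∈ S, jointForm T v ⬝ᵥ u = 0) {v : E}
    (hv : v ∈ Submodule.span ℂ S) : jointForm T v ⬝ᵥ u = 0 := by
  induction hv using Submodule.span_induction with
  | mem v hv => exact hS v hv
  | zero => rw [jointForm_zero, zero_dotProduct]
  | smul c v _ hv => rw [jointForm_smul, smul_dotProduct, hv, smul_zero]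
  | add v w _ _ hv hw =>
    have hpar := congrArg (· ⬝ᵥ u) (jointForm_add_add_jointForm_sub (T := T) v w)
    simp only [add_dotProduct, smul_dotProduct, hv, hw, smul_zero, add_zero] at hpar
    exact ((add_eq_zero_iff_of_nonneg (hu _) (hu _)).1 hpar).1

theorem exists_jointForm_eq_nonneg_smul (hF : IsEdgeAt (jointRange T) 0 F)
    (h0 : IsFaceOf (jointRange T) {0}) {g : Fin k → ℝ} (hg : g ∈ F) (hg0 : g ≠ 0) {v w : E} {t : ℝ}
    (ht : 0 ≤ t) (h : jointForm T v + jointForm T w = t • g) :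
    ∃ s : ℝ, 0 ≤ s ∧ jointForm T v = s • g := by
  rcases eq_or_ne v 0 with rfl | hv
  · exact ⟨0, le_rfl, by rw [jointForm_zero, zero_smul]⟩
  have h0C := hF.isFaceOf.2.subset hF.mem
  obtain ⟨x, hxC, hx⟩ := exists_mem_jointRange h0C v
  obtain ⟨y, hyC, hy⟩ := exists_mem_jointRange h0C w
  have hxF : x ∈ F := hF.isFaceOf.mem_of_smul_add_smul_eq convex_jointRange hF.mem hxC hyC hg
    (pow_pos (norm_pos_iff.2 hv) 2) (sq_nonneg ‖w‖) ht (by rw [← hx, ← hy, h])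
  obtain ⟨s, hs, hxs⟩ := hF.exists_eq_nonneg_smul convex_jointRange h0 hg hg0 hxF
  exact ⟨‖v‖ ^ 2 * s, by positivity, by rw [hx, hxs, smul_smul]⟩

theorem polarForm_eq_zero (hT : ∀ j, (T j).IsSymmetric) (hF : IsEdgeAt (jointRange T) 0 F)
    (h0 : IsFaceOf (jointRange T) {0}) {x y : E} (hx : jointForm T x = 0)
    (hy : jointForm T y ∈ F) (hy0 : jointForm T y ≠ 0) : polarForm T x y = 0 := by
  refine eq_zero_of_forall_exists_nonneg_smul hy0 fun t => ?_
  have hnorm : ‖(t : ℂ)‖ ^ 2 = t ^ 2 := by rw [Complex.norm_real, Real.norm_eq_abs, sq_abs]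
  have hpolar : polarForm T x ((t : ℂ) • y) = t • polarForm T x y := by
    ext j
    simp only [polarForm, map_smul, inner_smul_right, Complex.re_ofReal_mul, Pi.smul_apply,
      smul_eq_mul]
  have hexp : jointForm T (x + (t : ℂ) • y) =
      t ^ 2 • jointForm T y + (2 * t) • polarForm T x y := by
    rw [jointForm_add hT, hx, zero_add, jointForm_smul, hnorm, hpolar, smul_smul]
  rw [← hexp]
  refine exists_jointForm_eq_nonneg_smul hF h0 hy hy0 (w := x - (t : ℂ) • y) (t := 2 * t ^ 2)
    (by positivity) ?_
  rw [jointForm_add_add_jointForm_sub, hx, smul_zero, zero_add, jointForm_smul, hnorm, smul_smul]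

theorem inner_apply_eq_zero (hT : ∀ j, (T j).IsSymmetric) (hF : IsEdgeAt (jointRange T) 0 F)
    (h0 : IsFaceOf (jointRange T) {0}) {x y : E} (hx : jointForm T x = 0)
    (hy : jointForm T y ∈ F) (hy0 : jointForm T y ≠ 0) (j : Fin k) : inner ℂ x (T j y) = 0 := by
  have hI : jointForm T (Complex.I • y) = jointForm T y := by
    rw [jointForm_smul, Complex.norm_I, one_pow, one_smul]
  have hre : (inner ℂ x (T j y)).re = 0 := congrFun (polarForm_eq_zero hT hF h0 hx hy hy0) j
  have him : (inner ℂ x (T j (Complex.I • y))).re = 0 :=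
    congrFun (polarForm_eq_zero hT hF h0 hx (hI.symm ▸ hy) (hI.symm ▸ hy0)) j
  rw [map_smul, inner_smul_right, Complex.I_mul_re, neg_eq_zero] at him
  exact Complex.ext hre him

theorem linearIndependent_of_isotropic (hT : ∀ j, (T j).IsSymmetric) {x y₁ y₂ y₃ : E} (hx0 : x ≠ 0)
    (hx : jointForm T x = 0) (hxy : ∀ j, inner ℂ x (T j y₁) = 0)
    (hli : LinearIndependent ℝ ![jointForm T y₁, jointForm T y₂]) {u : Fin k → ℝ}
    (hu : ∀ v, 0 ≤ jointForm T v ⬝ᵥ u) (hu₁ : jointForm T y₁ ⬝ᵥ u = 0)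
    (hu₂ : jointForm T y₂ ⬝ᵥ u = 0) (hu₃ : jointForm T y₃ ⬝ᵥ u ≠ 0) :
    LinearIndependent ℂ ![y₃, y₂, x, y₁] := by
  have hy₁ : jointForm T y₁ ≠ 0 := hli.ne_zero 0
  refine LinearIndependent.finCons (LinearIndependent.finCons ?_ fun hy₂ => ?_) fun hy₃ => ?_
  · refine (LinearIndependent.pair_iff' hx0).2 fun a ha => hy₁ ?_
    rw [← ha, jointForm_smul, hx, smul_zero]
  · rw [Matrix.range_cons_cons_empty, Submodule.mem_span_pair] at hy₂
    obtain ⟨a, b, rfl⟩ := hy₂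
    refine (LinearIndependent.pair_iff' hy₁).1 hli (‖b‖ ^ 2) ?_
    have hpolar : polarForm T (a • x) (b • y₁) = 0 := by
      ext j
      simp [polarForm, hxy j]
    rw [jointForm_add hT, hpolar, jointForm_smul, jointForm_smul, hx]
    simp only [smul_zero, zero_add, add_zero]
  · refine hu₃ (dotProduct_jointForm_eq_zero_of_mem_span hu ?_ hy₃)
    rintro _ ⟨i, rfl⟩
    fin_cases i
    · exact hu₂
    · exact (congrArg (· ⬝ᵥ u) hx).trans (zero_dotProduct u)
    · exact hu₁

theorem inner_apply_self_eq_zero (hT : ∀ j, (T j).IsSymmetric) {x : E} (hx : jointForm T x = 0)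
    (j : Fin k) : inner ℂ x (T j x) = 0 := by
  have hre : RCLike.re (inner ℂ x (T j x)) = 0 := congrFun hx j
  rw [← (hT j).coe_re_inner_self_apply x, hre, RCLike.ofReal_zero]

theorem span_normalConeAt_jointRange_eq_top [FiniteDimensional ℂ E] (hT : ∀ j, (T j).IsSymmetric)
    (h0 : IsFaceOf (jointRange T) {0}) (hker : ∀ x, jointForm T x = 0 → ∀ j, T j x = 0) :
    Submodule.span ℝ (normalConeAt (jointRange T) 0) = ⊤ := by
  set K : Submodule ℂ E := ⨅ j, LinearMap.ker (T j) with hK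
  have hmemK : ∀ x, x ∈ K ↔ ∀ j, T j x = 0 := by simp [hK]
  set S : Set (Fin k → ℝ) := jointForm T '' (Kᗮ ∩ Metric.sphere 0 1)
  have hcompact : IsCompact S := by
    have : ProperSpace E := FiniteDimensional.proper_rclike ℂ E
    have hcont : Continuous (jointForm T) := continuous_pi fun j =>
      Complex.continuous_re.comp
        (continuous_id.inner (T j).continuous_of_finiteDimensional)
    exact ((isCompact_sphere 0 1).inter_left K.isClosed_orthogonal).image hcont
  have h0S : 0 ∉ convexHull ℝ S := fun h => by
    have hext : 0 ∈ (convexHull ℝ S).extremePoints ℝ :=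
      inter_extremePoints_subset_extremePoints_of_subset
        (convexHull_mono (Set.image_mono Set.inter_subset_right)) ⟨h, isExtreme_singleton.1 h0.2⟩
    obtain ⟨y, ⟨hyK, hy1⟩, hy⟩ := extremePoints_convexHull_subset hext
    have hy0 : y = 0 := K.orthogonal_disjoint.le_bot ⟨(hmemK y).2 (hker y hy), hyK⟩
    simp [hy0] at hy1
  rw [eq_top_iff, ← span_normalConeAt_zero_eq_top_of_isCompact hcompact h0S]
  refine Submodule.span_mono fun u hu => mem_normalConeAt_jointRange_iff.2 fun v => ?_
  obtain ⟨a, ha, b, hb, rfl⟩ := K.exists_add_mem_mem_orthogonal v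
  have hab : jointForm T (a + b) = jointForm T b := by
    ext j
    simp only [jointForm, map_add, (hmemK a).1 ha j, zero_add, inner_add_left]
    rw [← hT j a b, (hmemK a).1 ha j, inner_zero_left, zero_add]
  exact hab ▸ (mem_normalConeAt_image_sphere_iff Kᗮ).1 hu b hb

theorem IsEdgeAt.exists_jointForm_mem (hF : IsEdgeAt (jointRange T) 0 F) :
    ∃ y, jointForm T y ∈ F ∧ jointForm T y ≠ 0 := by
  obtain ⟨g, hg, hg0⟩ := hF.exists_mem_ne
  by_contra! h
  have hsub : convexHull ℝ (jointForm T '' Metric.sphere 0 1 ∩ F) ⊆ {0} := by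
    refine convexHull_min ?_ (convex_singleton 0)
    rintro _ ⟨⟨y, -, rfl⟩, hy⟩
    exact h y hy
  exact hg0 (hsub (hF.isFaceOf.subset_convexHull_inter hg))

theorem isCornerPoint_jointRange [FiniteDimensional ℂ E] (hE : Module.finrank ℂ E ≤ 4)
    {T : Fin 3 → E →ₗ[ℂ] E} (hT : ∀ j, (T j).IsSymmetric) {F : Fin 3 → Set (Fin 3 → ℝ)}
    (hF : ∀ i, IsEdgeAt (jointRange T) 0 (F i)) (hinj : Function.Injective F) :
    IsCornerPoint (jointRange T) 0 := by
  have hvertex : IsFaceOf (jointRange T) {0} := by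
    rw [← (hF 0).inter_eq_singleton convex_jointRange (hF 1) (hinj.ne (by decide))]
    exact (hF 0).isFaceOf.inter (hF 1).isFaceOf
  choose y hyF hy0 using fun i => (hF i).exists_jointForm_mem
  have hyF' : ∀ i j, i ≠ j → jointForm T (y i) ∉ F j := fun i j hij =>
    (hF i).notMem_of_ne convex_jointRange (hF j) (hinj.ne hij) (hyF i) (hy0 i)
  have hli : LinearIndependent ℝ fun i => jointForm T (y i) :=
    linearIndependent_of_mem_faces convex_jointRange (fun i => (hF i).isFaceOf)
      (fun i => (hF i).mem) hyF hy0 hyF'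
  obtain hcorner | ⟨u, hu, i, j, k, hij, hi, hj, hk⟩ := isCornerPoint_or_exists_mem_normalConeAt
    convex_jointRange (fun i => (hF i).isFaceOf) (fun i => (hF i).mem) hyF hyF' hli
  · exact hcorner
  refine ⟨hvertex.2.subset rfl, span_normalConeAt_jointRange_eq_top hT hvertex fun x hx l => ?_⟩
  rcases eq_or_ne x 0 with rfl | hx0
  · exact map_zero _
  have hxy : ∀ i l, inner ℂ x (T l (y i)) = 0 := fun i =>
    inner_apply_eq_zero hT (hF i) hvertex hx (hyF i) (hy0 i)
  have hpair : LinearIndependent ℝ ![jointForm T (y i), jointForm T (y j)] :=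
    LinearIndependent.pair_iff.2 ((LinearIndepOn.pair_iff _ hij).1 (hli.linearIndepOn {i, j}))
  have hbasis := linearIndependent_of_isotropic hT hx0 hx (hxy i) hpair
    (mem_normalConeAt_jointRange_iff.1 hu) hi hj hk
  refine apply_eq_zero_of_span_eq_top (hT l) (hbasis.span_eq_top_of_card_eq_finrank'
    (hbasis.fintype_card_le_finrank.antisymm (by simpa using hE))) ?_
  rintro _ ⟨m, rfl⟩
  fin_cases m
  exacts [hxy k l, hxy j l, inner_apply_self_eq_zero hT hx l, hxy i l]

end JointForm

section JointNumericalRange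

variable {n : Type*} [Fintype n] {k : ℕ}

theorem convex_JNR (A : Fin k → Matrix n n ℂ) : Convex ℝ (JNR A) := by
  have hlin : IsLinearMap ℝ (wpt A) := by
    refine ⟨fun ρ σ => ?_, fun c ρ => ?_⟩ <;> ext j <;>
      simp [wpt, Matrix.add_mul]
  refine Convex.is_linear_image ?_ hlin
  rintro ρ ⟨hρ, hρ1⟩ σ ⟨hσ, hσ1⟩ a b ha hb hab
  refine ⟨(hρ.smul ha).add (hσ.smul hb), ?_⟩
  rw [Matrix.trace_add, Matrix.trace_smul, Matrix.trace_smul, hρ1, hσ1, ← add_smul, hab, one_smul]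

theorem isDensity_vecMulVec_star {v : EuclideanSpace ℂ n} (hv : ‖v‖ = 1) :
    IsDensity (Matrix.vecMulVec v.ofLp (star v.ofLp)) := by
  refine ⟨Matrix.posSemidef_vecMulVec_self_star _, ?_⟩
  rw [Matrix.trace_vecMulVec, ← EuclideanSpace.inner_eq_star_dotProduct,
    inner_self_eq_norm_sq_to_K, hv, RCLike.ofReal_one, one_pow]

section DecidableEq

variable [DecidableEq n]

theorem wpt_vecMulVec_star (A : Fin k → Matrix n n ℂ) (v : EuclideanSpace ℂ n) :
    wpt A (Matrix.vecMulVec v.ofLp (star v.ofLp)) =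
      jointForm (fun j => Matrix.toEuclideanLin (A j)) v := by
  ext j
  rw [wpt, jointForm, EuclideanSpace.inner_eq_star_dotProduct, Matrix.toLpLin_apply,
    Matrix.trace_mul_comm, Matrix.mul_vecMulVec, Matrix.trace_vecMulVec]

theorem trace_mul_eq_sum_eigenvalues {ρ : Matrix n n ℂ} (hρ : ρ.IsHermitian) (M : Matrix n n ℂ) :
    (ρ * M).trace = ∑ i, (hρ.eigenvalues i : ℂ) *
      inner ℂ (hρ.eigenvectorBasis i) (Matrix.toEuclideanLin M (hρ.eigenvectorBasis i)) := by
  have htrace : LinearMap.trace ℂ _ (Matrix.toEuclideanLin (M * ρ)) = (M * ρ).trace := by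
    rw [LinearMap.trace_eq_matrix_trace ℂ (PiLp.basisFun 2 ℂ n),
      Matrix.toEuclideanLin, Matrix.toLpLin_eq_toLin, LinearMap.toMatrix_toLin]
  rw [Matrix.trace_mul_comm, ← htrace, LinearMap.trace_eq_sum_inner _ hρ.eigenvectorBasis]
  refine Finset.sum_congr rfl fun i _ => ?_
  rw [← inner_smul_right, ← map_smul, Matrix.toLpLin_apply, Matrix.toLpLin_apply,
    ← Matrix.mulVec_mulVec, hρ.mulVec_eigenvectorBasis]
  rfl

theorem wpt_eq_sum_eigenvalues (A : Fin k → Matrix n n ℂ) {ρ : Matrix n n ℂ}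
    (hρ : ρ.IsHermitian) : wpt A ρ = ∑ i, hρ.eigenvalues i •
      jointForm (fun j => Matrix.toEuclideanLin (A j)) (hρ.eigenvectorBasis i) := by
  ext j
  rw [wpt, trace_mul_eq_sum_eigenvalues hρ]
  simp only [jointForm, Complex.re_sum, Complex.re_ofReal_mul, Finset.sum_apply, Pi.smul_apply,
    smul_eq_mul]

theorem JNR_eq_jointRange (A : Fin k → Matrix n n ℂ) :
    JNR A = jointRange fun j => Matrix.toEuclideanLin (A j) := by
  refine Set.Subset.antisymm ?_ (convexHull_min ?_ (convex_JNR A))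
  · rintro _ ⟨ρ, ⟨hρ, hρ1⟩, rfl⟩
    have hsum : ∑ i, hρ.isHermitian.eigenvalues i = 1 := by
      simpa using congrArg Complex.re (hρ.isHermitian.trace_eq_sum_eigenvalues.symm.trans hρ1)
    rw [wpt_eq_sum_eigenvalues A hρ.isHermitian]
    exact (convex_convexHull ℝ _).sum_mem (fun i _ => hρ.eigenvalues_nonneg i) hsum fun i _ =>
      subset_convexHull ℝ _ ⟨_, mem_sphere_zero_iff_norm.2
        (hρ.isHermitian.eigenvectorBasis.norm_eq_one i), rfl⟩
  · rintro _ ⟨v, hv, rfl⟩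
    exact ⟨_, isDensity_vecMulVec_star (mem_sphere_zero_iff_norm.1 hv), wpt_vecMulVec_star A v⟩

theorem JNR_sub_smul_one (A : Fin k → Matrix n n ℂ) (p : Fin k → ℝ) :
    JNR (fun j => A j - (p j : ℂ) • 1) = -p +ᵥ JNR A := by
  rw [JNR, JNR, ← Set.image_vadd, Set.image_image]
  refine Set.image_congr fun ρ hρ => ?_
  ext j
  simp [wpt, Matrix.mul_sub, hρ.2, neg_add_eq_sub]

end DecidableEq

theorem isCornerPoint_JNR (hn : Fintype.card n ≤ 4) {A : Fin 3 → Matrix n n ℂ}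
    (hA : ∀ i, (A i).IsHermitian) {p : Fin 3 → ℝ} {G : Fin 3 → Set (Fin 3 → ℝ)}
    (hG : ∀ i, IsEdgeAt (JNR A) p (G i)) (hinj : Function.Injective G) :
    IsCornerPoint (JNR A) p := by
  classical
  set T := fun j => Matrix.toEuclideanLin (A j - (p j : ℂ) • 1) with hT
  have hrange : jointRange T = -p +ᵥ JNR A := by
    rw [hT, ← JNR_eq_jointRange, JNR_sub_smul_one]
  have hsymm : ∀ j, (T j).IsSymmetric := fun j => by
    refine Matrix.isSymmetric_toEuclideanLin_iff.2 ((hA j).sub ?_)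
    simp [Matrix.IsHermitian, Matrix.conjTranspose_smul]
  have hedge : ∀ i, IsEdgeAt (jointRange T) 0 (-p +ᵥ G i) := fun i => by
    rw [hrange, ← neg_add_cancel p]
    exact (hG i).vadd (-p)
  refine IsCornerPoint.of_vadd (v := -p) ?_
  rw [← hrange, neg_add_cancel]
  exact isCornerPoint_jointRange (by simpa using hn) hsymm hedge
    ((AddAction.injective (-p)).image_injective.comp hinj)

end JointNumericalRange

theorem stmt0_general {n : Type*} [Fintype n] (hn : Fintype.card n ≤ 4)
    (A : Fin 3 → Matrix n n ℂ) (hA : ∀ i, (A i).IsHermitian) (G₁ G₂ G₃ : Set (Fin 3 → ℝ))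
    (hG₁ : IsFaceOf (JNR A) G₁) (hd₁ : convDim G₁ = 1)
    (hG₂ : IsFaceOf (JNR A) G₂) (hd₂ : convDim G₂ = 1)
    (hG₃ : IsFaceOf (JNR A) G₃) (hd₃ : convDim G₃ = 1)
    (h12 : G₁ ≠ G₂) (h13 : G₁ ≠ G₃) (h23 : G₂ ≠ G₃)
    (hne : (G₁ ∩ G₂ ∩ G₃).Nonempty) :
    ∃ p, G₁ ∩ G₂ ∩ G₃ = {p} ∧ IsCornerPoint (JNR A) p := by
  obtain ⟨p, ⟨hp₁, hp₂⟩, hp₃⟩ := hne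
  have hG : ∀ i, IsEdgeAt (JNR A) p (![G₁, G₂, G₃] i) := Fin.forall_fin_succ.2
    ⟨⟨hG₁, hp₁, hd₁⟩, Fin.forall_fin_two.2 ⟨⟨hG₂, hp₂, hd₂⟩, ⟨hG₃, hp₃, hd₃⟩⟩⟩
  have hinj : Function.Injective ![G₁, G₂, G₃] := by
    refine Fin.cons_injective_iff.2 ⟨?_, injective_pair_iff_ne.2 h23⟩
    simp [h12, h13]
  refine ⟨p, ?_, isCornerPoint_JNR hn hA hG hinj⟩
  have h12p : G₁ ∩ G₂ = {p} := (hG 0).inter_eq_singleton (convex_JNR A) (hG 1) h12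
  rw [h12p]
  exact Set.inter_eq_left.2 (Set.singleton_subset_iff.2 hp₃)

/-- A nonempty intersection of three mutually distinct
one-dimensional faces of `W` is a singleton consisting of a corner point. -/
theorem stmt0 (A : Fin 3 → Matrix (Fin 4) (Fin 4) ℂ)
    (hA : ∀ i, (A i).IsHermitian)
    (hdim : convDim (JNR A) = 3)
    (G₁ G₂ G₃ : Set (Fin 3 → ℝ))
    (hG₁ : IsFaceOf (JNR A) G₁) (hd₁ : convDim G₁ = 1)
    (hG₂ : IsFaceOf (JNR A) G₂) (hd₂ : convDim G₂ = 1)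
    (hG₃ : IsFaceOf (JNR A) G₃) (hd₃ : convDim G₃ = 1)
    (h12 : G₁ ≠ G₂) (h13 : G₁ ≠ G₃) (h23 : G₂ ≠ G₃)
    (hne : (G₁ ∩ G₂ ∩ G₃).Nonempty) :
    ∃ p, G₁ ∩ G₂ ∩ G₃ = {p} ∧ IsCornerPoint (JNR A) p :=
  stmt0_general (by simp) A hA G₁ G₂ G₃ hG₁ hd₁ hG₂ hd₂ hG₃ hd₃ h12 h13 h23 hne
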